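/- Let Ω ⊂ ℝ² be a compact convex set of positive measure, let T = {x ∈ ℝ² : |x| = r} be a circle of radius r > 0, and let V = {v_k} ⊂ ℝ² be a uniformly discrete set. Then the union of translated circles P = V + T = ⋃_k (v_k + T) is a sampling set for B_Ω if and only if D⁻(V) > 0. -/

import Mathlib

open MeasureTheory FourierTransform Filter Metric
open scoped Pointwise RealInnerProductSpace ENNReal NNReal

noncomputable section

variable {V : Type*} [NormedAddCommGroup V] [InnerProductSpace ℝ V]
  [FiniteDimensional ℝ V] [MeasurableSpace V] [BorelSpace V]

/-- `f` belongs to the Bernstein space `B_Ω`: it is a continuous bounded function which is the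
inverse Fourier transform of a tempered distribution supported in `Ω`, i.e. its distributional
Fourier transform annihilates every test function whose support is disjoint from `Ω`. -/
def MemBernstein (Ω : Set V) (f : V → ℂ) : Prop :=
  Continuous f ∧ (∃ C, ∀ x, ‖f x‖ ≤ C) ∧
    ∀ ψ : V → ℂ, ContDiff ℝ (⊤ : ℕ∞) ψ → HasCompactSupport ψ → tsupport ψ ∩ Ω = ∅ →
      ∫ x, f x * 𝓕 ψ x = 0

/-- `P` is a sampling set for the Bernstein space `B_Ω`:
`‖f‖_∞ ≤ C · sup_{x ∈ P} ‖f x‖` for all `f ∈ B_Ω`. -/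
def IsSamplingSet (Ω P : Set V) : Prop :=
  ∃ C > 0, ∀ f : V → ℂ, MemBernstein Ω f →
    ∀ x : V, ‖f x‖ ≤ C * sSup ((fun p => ‖f p‖) '' P)

/-- A set is uniformly discrete if distinct points are separated by a fixed positive distance. -/
def UniformlyDiscrete {X : Type*} [PseudoMetricSpace X] (Λ : Set X) : Prop :=
  ∃ δ > 0, ∀ x ∈ Λ, ∀ y ∈ Λ, x ≠ y → δ ≤ dist x y

/-- The lower uniform (Beurling) density of a set:
`D⁻(Λ) = lim_{r→∞} inf_x #(Λ ∩ B_r(x)) / |B_r(x)|`. -/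
def lowerUniformDensity {X : Type*} [NormedAddCommGroup X] [MeasureSpace X] (Λ : Set X) : ℝ :=
  liminf (fun r : ℝ => ⨅ x : X,
    (Nat.card ↥(Λ ∩ closedBall x r) : ℝ) / (volume (closedBall x r)).toReal) atTop

/-!
For a uniformly discrete set, positive lower uniform density means relative density.

Translations act on `B_Ω` as a norm-continuous group of operators, so the restriction of `f ∈ B_Ω`
to any line extends to an entire function of exponential type, and if `f` vanishes on a circle then
its extension vanishes on the complexified circle. For a unit vector `e`, the complex line `ℂ e`
meets the complexification of the circle with centre `c` and radius `r` at the points `z` with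
`Re z = ⟪e, c⟫` and `(Im z)² + r² = ‖c - (Re z) e‖²`. When the centres are relatively dense in the
plane, so are these zeros in `ℂ`: too many for a nonzero function of exponential type, by Jensen's
inequality. Hence `f = 0`, and since `B_Ω` has a common modulus of continuity, compactness turns
this uniqueness into the sampling inequality.

Conversely, the inverse Fourier transform of the indicator function of `Ω` lies in `B_Ω`, is nonzero
and tends to zero at infinity, so its translates detect every large hole in a sampling set.
-/

section LowerUniformDensity

/-- Relatively dense (syndetic) sets: every point of the space is within a fixed distance of the
set. -/
def RelativelyDense {X : Type*} [PseudoMetricSpace X] (Λ : Set X) : Prop :=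
  ∃ R, ∀ x, ∃ v ∈ Λ, dist v x ≤ R

theorem RelativelyDense.exists_pos {X : Type*} [PseudoMetricSpace X] {Λ : Set X}
    (hΛ : RelativelyDense Λ) : ∃ R > 0, ∀ x, ∃ v ∈ Λ, dist v x ≤ R :=
  let ⟨R, hR⟩ := hΛ
  ⟨max R 1, by positivity, fun x =>
    let ⟨v, hv, hvx⟩ := hR x
    ⟨v, hv, hvx.trans (le_max_left R 1)⟩⟩

theorem RelativelyDense.of_add_of_isBounded {E : Type*} [SeminormedAddCommGroup E] {Λ T : Set E}
    (hΛT : RelativelyDense (Λ + T)) (hT : Bornology.IsBounded T) : RelativelyDense Λ := by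
  obtain ⟨R, hR⟩ := hΛT
  obtain ⟨D, hD⟩ := hT.exists_norm_le
  refine ⟨R + D, fun x => ?_⟩
  obtain ⟨_, ⟨v, hv, t, ht, rfl⟩, hx⟩ := hR x
  refine ⟨v, hv, ?_⟩
  calc dist v x ≤ dist (v + t) x + dist v (v + t) := by
        rw [add_comm]; exact dist_triangle _ _ _
    _ ≤ R + D := add_le_add hx (by simpa using hD t ht)

theorem relativelyDense_of_lowerUniformDensity_pos {E : Type*} [NormedAddCommGroup E]
    [MeasureSpace E] {Λ : Set E} (hΛ : 0 < lowerUniformDensity Λ) : RelativelyDense Λ := by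
  have hnonneg (R : ℝ) (x : E) :
      0 ≤ (Nat.card ↥(Λ ∩ closedBall x R) : ℝ) / (volume (closedBall x R)).toReal := by positivity
  obtain ⟨R, hR⟩ := (eventually_lt_of_lt_liminf hΛ
    (isBoundedUnder_of ⟨0, fun R => Real.iInf_nonneg (hnonneg R)⟩)).exists
  refine ⟨R, fun x => ?_⟩
  have hcard : 0 < (Nat.card ↥(Λ ∩ closedBall x R) : ℝ) / (volume (closedBall x R)).toReal :=
    hR.trans_le (ciInf_le ⟨0, Set.forall_mem_range.2 (hnonneg R)⟩ x)
  have hcard' : Nat.card ↥(Λ ∩ closedBall x R) ≠ 0 := fun h => by simp [h] at hcard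
  obtain ⟨v, hv, hvx⟩ := (Nat.card_ne_zero.1 hcard').1
  exact ⟨v, hv, hvx⟩

theorem UniformlyDiscrete.finite_inter_closedBall {X : Type*} [PseudoMetricSpace X]
    [ProperSpace X] {Λ : Set X} (hΛ : UniformlyDiscrete Λ) (x : X) (R : ℝ) :
    (Λ ∩ closedBall x R).Finite := by
  obtain ⟨δ, hδ, hsep⟩ := hΛ
  obtain ⟨t, -, ht, hcover⟩ := (isCompact_closedBall x R).finite_cover_balls (half_pos hδ)
  refine (ht.biUnion fun y _ => Set.Subsingleton.finite (s := Λ ∩ ball y (δ / 2)) ?_).subset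
    (by rw [← Set.inter_iUnion₂]; gcongr)
  rintro v ⟨hv, hvy⟩ w ⟨hw, hwy⟩
  by_contra hvw
  linarith [hsep v hv w hw hvw, dist_triangle_right v w y, mem_ball.1 hvy, mem_ball.1 hwy]

theorem measureReal_ball_pos {X : Type*} [PseudoMetricSpace X] [ProperSpace X] [MeasurableSpace X]
    (μ : Measure X) [μ.IsOpenPosMeasure] [IsFiniteMeasureOnCompacts μ] (x : X) {R : ℝ}
    (hR : 0 < R) : 0 < μ.real (ball x R) :=
  ENNReal.toReal_pos (measure_ball_pos _ _ hR).ne' measure_ball_lt_top.ne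

variable {E : Type*} [NormedAddCommGroup E] [NormedSpace ℝ E] [FiniteDimensional ℝ E]
  [MeasureSpace E] [BorelSpace E] [(volume : Measure E).IsAddHaarMeasure] {Λ : Set E}

open Module (finrank)

theorem UniformlyDiscrete.exists_card_mul_pow_le (hΛ : UniformlyDiscrete Λ) :
    ∃ δ > 0, ∀ x, ∀ R ≥ 0, (Nat.card ↥(Λ ∩ closedBall x R) : ℝ) * δ ^ finrank ℝ E ≤
      (R + δ) ^ finrank ℝ E := by
  obtain ⟨δ, hδ, hsep⟩ := id hΛ
  refine ⟨δ / 3, by positivity, fun x R hR => ?_⟩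
  have hfin := hΛ.finite_inter_closedBall x R
  have hdisj : (hfin.toFinset : Set E).PairwiseDisjoint fun v => closedBall v (δ / 3) := by
    intro v hv w hw hvw
    rw [hfin.coe_toFinset] at hv hw
    exact closedBall_disjoint_closedBall (by linarith [hsep v hv.1 w hw.1 hvw])
  have hsub : ⋃ v ∈ hfin.toFinset, closedBall v (δ / 3) ⊆ closedBall x (R + δ / 3) :=
    Set.iUnion₂_subset fun v hv => closedBall_subset_closedBall' (by
      linarith [mem_closedBall.1 (hfin.mem_toFinset.1 hv).2])
  have hvol := measureReal_mono (μ := volume) hsub measure_closedBall_lt_top.ne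
  rw [measureReal_biUnion_finset hdisj (fun _ _ => measurableSet_closedBall)
      fun _ _ => measure_closedBall_lt_top.ne,
    Finset.sum_congr rfl fun v _ => Measure.addHaar_real_closedBall volume v (by positivity),
    Finset.sum_const, nsmul_eq_mul, ← mul_assoc,
    Measure.addHaar_real_closedBall volume x (by positivity),
    ← Nat.card_eq_card_finite_toFinset hfin] at hvol
  exact le_of_mul_le_mul_right hvol (measureReal_ball_pos volume 0 one_pos)

theorem RelativelyDense.exists_pow_le_card_mul (hΛ : RelativelyDense Λ)
    (hfin : ∀ x R, (Λ ∩ closedBall x R).Finite) :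
    ∃ R₀ > 0, ∀ x, ∀ R ≥ R₀, (R - R₀) ^ finrank ℝ E ≤
      Nat.card ↥(Λ ∩ closedBall x R) * R₀ ^ finrank ℝ E := by
  obtain ⟨R₀, hR₀, hdense⟩ := hΛ.exists_pos
  refine ⟨R₀, hR₀, fun x R hR => ?_⟩
  have hcover : closedBall x (R - R₀) ⊆ ⋃ v ∈ (hfin x R).toFinset, closedBall v R₀ := by
    intro y hy
    obtain ⟨v, hv, hvy⟩ := hdense y
    refine Set.mem_iUnion₂.2 ⟨v, (hfin x R).mem_toFinset.2 ⟨hv, ?_⟩, mem_closedBall'.2 hvy⟩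
    exact mem_closedBall.2 (by linarith [dist_triangle v y x, mem_closedBall.1 hy])
  have hvol := (measureReal_mono (μ := volume) hcover
    (measure_biUnion_lt_top (hfin x R).toFinset.finite_toSet
      fun _ _ => measure_closedBall_lt_top).ne).trans (measureReal_biUnion_finset_le _ _)
  rw [Finset.sum_congr rfl fun v _ => Measure.addHaar_real_closedBall volume v hR₀.le,
    Finset.sum_const, nsmul_eq_mul, ← mul_assoc,
    Measure.addHaar_real_closedBall volume x (by linarith),
    ← Nat.card_eq_card_finite_toFinset (hfin x R)] at hvol
  exact le_of_mul_le_mul_right hvol (measureReal_ball_pos volume 0 one_pos)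

theorem UniformlyDiscrete.lowerUniformDensity_pos (hΛ : UniformlyDiscrete Λ)
    (hdense : RelativelyDense Λ) : 0 < lowerUniformDensity Λ := by
  obtain ⟨δ, hδ, hupper⟩ := hΛ.exists_card_mul_pow_le
  obtain ⟨R₀, hR₀, hlower⟩ := hdense.exists_pow_le_card_mul hΛ.finite_inter_closedBall
  set d := finrank ℝ E
  set ω := volume.real (ball (0 : E) 1)
  have hω : 0 < ω := measureReal_ball_pos volume 0 one_pos
  have hvol (x : E) {R : ℝ} (hR : 0 ≤ R) : (volume (closedBall x R)).toReal = R ^ d * ω :=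
    Measure.addHaar_real_closedBall volume x hR
  have hle : ∀ᶠ R in atTop, (⨅ x : E, (Nat.card ↥(Λ ∩ closedBall x R) : ℝ) /
      (volume (closedBall x R)).toReal) ≤ (2 / δ) ^ d / ω := by
    filter_upwards [eventually_ge_atTop δ] with R hR
    have hR0 : 0 < R := hδ.trans_le hR
    refine (ciInf_le ⟨0, Set.forall_mem_range.2 fun x => by positivity⟩ 0).trans ?_
    rw [hvol 0 hR0.le, ← div_div, div_le_div_iff_of_pos_right hω, div_le_iff₀ (by positivity),
      ← mul_pow, div_mul_eq_mul_div, div_pow, le_div_iff₀ (by positivity)]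
    exact (hupper 0 R hR0.le).trans (by gcongr; linarith)
  have hge : ∀ᶠ R in atTop, (2 * R₀)⁻¹ ^ d / ω ≤ ⨅ x : E,
      (Nat.card ↥(Λ ∩ closedBall x R) : ℝ) / (volume (closedBall x R)).toReal := by
    filter_upwards [eventually_ge_atTop (2 * R₀)] with R hR
    have hR0 : 0 < R := by linarith
    refine le_ciInf fun x => ?_
    rw [hvol x hR0.le, ← div_div, div_le_div_iff_of_pos_right hω, le_div_iff₀ (by positivity),
      ← mul_pow, inv_mul_eq_div, div_mul_eq_div_div, div_pow, div_le_iff₀ (by positivity)]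
    exact le_trans (by gcongr; linarith) (hlower x R (by linarith))
  exact lt_of_lt_of_le (by positivity)
    (le_liminf_of_le (IsBoundedUnder.isCoboundedUnder_ge ⟨_, hle⟩) hge)

theorem UniformlyDiscrete.lowerUniformDensity_pos_iff (hΛ : UniformlyDiscrete Λ) :
    0 < lowerUniformDensity Λ ↔ RelativelyDense Λ :=
  ⟨relativelyDense_of_lowerUniformDensity_pos, hΛ.lowerUniformDensity_pos⟩

end LowerUniformDensity

section EntireFunctions

theorem card_zeros_le_log {G : ℂ → ℂ} (hG : Differentiable ℂ G) {c : ℂ} (hc : G c ≠ 0)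
    {r M : ℝ} (hr : 0 < r) (hM : 1 ≤ M) (hGM : ∀ z ∈ sphere c (Real.exp 1 * r), ‖G z‖ ≤ M)
    (S : Finset ℂ) (hS : ∀ a ∈ S, G a = 0 ∧ a ∈ closedBall c r) :
    (S.card : ℝ) ≤ Real.log (M / ‖G c‖) := by
  have hR : 0 < Real.exp 1 * r := by positivity
  have hrR : r < Real.exp 1 * r := lt_mul_of_one_lt_left hr (Real.one_lt_exp_iff.2 one_pos)
  have hGana (U : Set ℂ) : AnalyticOnNhd ℂ G U := fun z _ => hG.analyticAt z
  set D := MeromorphicOn.divisor G (closedBall c |r|) with hD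
  have hDS : ∀ a ∈ S, 1 ≤ D a := by
    intro a ha
    obtain ⟨ha0, har⟩ := hS a ha
    have hne_top : analyticOrderAt G a ≠ ⊤ :=
      (hGana Set.univ).analyticOrderAt_ne_top_of_isPreconnected isPreconnected_univ
        (Set.mem_univ c) (Set.mem_univ a) (by simp [analyticOrderAt_eq_zero.2 (.inr hc)])
    have hne_zero : analyticOrderAt G a ≠ 0 := (hG.analyticAt a).analyticOrderAt_ne_zero.2 ha0
    rw [hD, MeromorphicOn.AnalyticOnNhd.divisor_apply (hGana _) (by rwa [abs_of_pos hr])]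
    lift analyticOrderAt G a to ℕ using hne_top with n
    simpa [Nat.one_le_iff_ne_zero] using hne_zero
  have hDfin : D.support.Finite := D.finiteSupport (isCompact_closedBall _ _)
  have hcard : (S.card : ℤ) ≤ ∑ᶠ a, D a := by
    rw [finsum_eq_sum_of_support_subset D (s := hDfin.toFinset) (by simp)]
    calc (S.card : ℤ) = ∑ a ∈ S, 1 := by simp
      _ ≤ ∑ a ∈ S, D a := Finset.sum_le_sum hDS
      _ ≤ ∑ a ∈ hDfin.toFinset, D a := Finset.sum_le_sum_of_subset_of_nonneg
        (fun a ha => hDfin.mem_toFinset.2 (zero_lt_one.trans_le (hDS a ha)).ne')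
        fun a _ _ => MeromorphicOn.AnalyticOnNhd.divisor_nonneg (hGana _) a
  have hjensen := AnalyticOnNhd.sum_divisor_le (R := Real.exp 1 * r) (abs_pos.2 hr.ne')
    (by rwa [abs_of_pos hr, abs_of_pos hR]) hM (hGana _) hc (by rwa [abs_of_pos hR])
  rw [mul_div_cancel_right₀ _ hr.ne', Real.log_exp, div_one] at hjensen
  exact le_trans (mod_cast hcard) hjensen

theorem RelativelyDense.exists_injective_grid {Z : Set ℂ} (hZ : RelativelyDense Z) :
    ∃ L > 0, ∀ c, ∃ ζ : ℕ × ℕ → ℂ, Function.Injective ζ ∧ (∀ p, ζ p ∈ Z) ∧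
      ∀ N : ℕ, ∀ p ∈ Finset.range N ×ˢ Finset.range N, ζ p ∈ closedBall c (L * (2 * N)) := by
  obtain ⟨R, hR⟩ := hZ
  have hR0 : 0 ≤ R := let ⟨_, _, h⟩ := hR 0; dist_nonneg.trans h
  set L : ℝ := 2 * R + 1
  have hL : 0 < L := by positivity
  choose near hnear_mem hnear using hR
  let node (c : ℂ) (p : ℕ × ℕ) : ℂ := c + L * ⟨p.1, p.2⟩
  refine ⟨L, hL, fun c => ⟨fun p => near (node c p), ?_, fun p => hnear_mem _, ?_⟩⟩
  · intro p q (hpq : near (node c p) = near (node c q))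
    have hq : dist (near (node c p)) (node c q) ≤ R := hpq ▸ hnear (node c q)
    have hdist : dist (node c p) (node c q) < L * 1 := by
      linarith [dist_triangle_left (node c p) (node c q) (near (node c p)), hnear (node c p),
        hq]
    rw [dist_add_left, dist_eq_norm, ← mul_sub, norm_mul, Complex.norm_of_nonneg hL.le] at hdist
    have hlt := lt_of_mul_lt_mul_left hdist hL.le
    have hre := (Complex.abs_re_le_norm _).trans_lt hlt
    have him := (Complex.abs_im_le_norm _).trans_lt hlt
    simp only [Complex.sub_re, Complex.sub_im] at hre him
    ext
    · exact_mod_cast sub_eq_zero.1 (Int.abs_lt_one_iff.1 (mod_cast hre : |(p.1 - q.1 : ℤ)| < 1))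
    · exact_mod_cast sub_eq_zero.1 (Int.abs_lt_one_iff.1 (mod_cast him : |(p.2 - q.2 : ℤ)| < 1))
  · rintro N ⟨j, k⟩ hp
    simp only [Finset.mem_product, Finset.mem_range, Nat.lt_iff_add_one_le] at hp
    have hj : (j : ℝ) + 1 ≤ N := mod_cast hp.1
    have hk : (k : ℝ) + 1 ≤ N := mod_cast hp.2
    have hnorm : ‖(⟨j, k⟩ : ℂ)‖ ≤ j + k := by
      simpa using Complex.norm_le_abs_re_add_abs_im ⟨j, k⟩
    calc dist (near (node c (j, k))) c
        ≤ dist (near (node c (j, k))) (node c (j, k)) + dist (node c (j, k)) c :=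
          dist_triangle _ _ _
      _ ≤ R + L * (j + k) := by
        gcongr
        · exact hnear _
        · rw [dist_eq_norm, add_sub_cancel_left, norm_mul, Complex.norm_of_nonneg hL.le]
          gcongr
      _ ≤ L * (2 * N) := by nlinarith

/-- Jensen's inequality: a nonzero function of exponential type has `O(N)` zeros in a ball of radius
`N`, whereas a relatively dense set has at least a multiple of `N ^ 2` points there. -/
theorem eq_zero_of_relativelyDense_zeros {G : ℂ → ℂ} (hG : Differentiable ℂ G) {A C : ℝ}
    (hGexp : ∀ z, ‖G z‖ ≤ C * Real.exp (A * ‖z‖)) (hZ : RelativelyDense {z | G z = 0}) :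
    G = 0 := by
  by_contra hne
  obtain ⟨c, hc : G c ≠ 0⟩ := Function.ne_iff.1 hne
  obtain ⟨L, hL, hgrid⟩ := hZ.exists_injective_grid
  obtain ⟨ζ, hζinj, hζ0, hζball⟩ := hgrid c
  set C' := max C 1
  set a := Real.log (C' / ‖G c‖) + |A| * ‖c‖
  set b := |A| * (Real.exp 1 * (L * 2))
  have hcard : ∀ N : ℕ, 0 < N → (N * N : ℝ) ≤ a + b * N := by
    intro N hN
    have hsphere : ∀ z ∈ sphere c (Real.exp 1 * (L * (2 * N))),
        ‖G z‖ ≤ C' * Real.exp (|A| * (‖c‖ + Real.exp 1 * (L * (2 * N)))) := by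
      intro z hz
      refine (hGexp z).trans ?_
      gcongr
      · exact le_max_left _ _
      · exact le_abs_self A
      · simpa [← mem_sphere_iff_norm.1 hz] using norm_add_le c (z - c)
    have h := card_zeros_le_log hG hc (by positivity)
      (one_le_mul_of_one_le_of_one_le (le_max_right _ _) (Real.one_le_exp (by positivity)))
      hsphere ((Finset.range N ×ˢ Finset.range N).image ζ) (by
        simp only [Finset.mem_image, forall_exists_index, and_imp]
        rintro _ p hp rfl
        exact ⟨hζ0 p, hζball N p hp⟩)
    rw [Finset.card_image_of_injective _ hζinj, Finset.card_product, Finset.card_range,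
      mul_div_right_comm, Real.log_mul (by positivity) (by positivity), Real.log_exp] at h
    push_cast at h
    linarith
  obtain ⟨N, hN⟩ := exists_nat_gt (|a| + b)
  have hb : 0 ≤ b := by positivity
  have hN0 : (0 : ℝ) < N := (add_nonneg (abs_nonneg a) hb).trans_lt hN
  have hN1 : (1 : ℝ) ≤ N := by exact_mod_cast hN0
  nlinarith [hcard N (mod_cast hN0), le_abs_self a, abs_nonneg a]

end EntireFunctions

section BernsteinSpace

theorem tendsto_integral_norm_add_sub {E F : Type*} [NormedAddCommGroup E] [ProperSpace E]
    [MeasurableSpace E] [BorelSpace E] {μ : Measure E} [μ.IsAddHaarMeasure]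
    [NormedAddCommGroup F] {K : E → F} (hK : Integrable K μ) :
    Tendsto (fun u => ∫ y, ‖K (u + y) - K y‖ ∂μ) (nhds 0) (nhds 0) := by
  have : Fact ((1 : ℝ≥0∞) ≠ ∞) := ⟨ENNReal.one_ne_top⟩
  have hK' : MemLp K 1 μ := memLp_one_iff_integrable.2 hK
  have hcont : Continuous fun u : E => ‖(DomAddAct.mk u +ᵥ hK'.toLp K) - hK'.toLp K‖ := by
    have : Continuous fun u : E => DomAddAct.mk u := DomAddAct.continuous_mk
    fun_prop
  have h := hcont.tendsto 0
  rw [DomAddAct.mk_zero, zero_vadd, sub_self, norm_zero] at h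
  refine h.congr fun u => ?_
  rw [L1.norm_eq_integral_norm]
  refine integral_congr_ae ?_
  filter_upwards [Lp.coeFn_sub (DomAddAct.mk u +ᵥ hK'.toLp K) (hK'.toLp K), hK'.coeFn_toLp,
    (hK'.comp_measurePreserving (measurePreserving_vadd u μ)).coeFn_toLp] with y h₁ h₂ h₃
  rw [h₁, Pi.sub_apply, h₂, DomAddAct.mk_vadd_toLp]
  exact congrArg (‖· - K y‖) h₃

theorem integrable_fourier_of_contDiff {ψ : V → ℂ} (hψ : ContDiff ℝ (⊤ : ℕ∞) ψ)
    (hψc : HasCompactSupport ψ) : Integrable (𝓕 ψ) :=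
  (𝓕 (hψc.toSchwartzMap hψ)).integrable

theorem integral_fourier_of_contDiff {ψ : V → ℂ} (hψ : ContDiff ℝ (⊤ : ℕ∞) ψ)
    (hψc : HasCompactSupport ψ) : ∫ x, 𝓕 ψ x = ψ 0 := by
  have h := congrFun (hψ.continuous.fourierInv_fourier_eq
    (hψ.continuous.integrable_of_hasCompactSupport hψc) (integrable_fourier_of_contDiff hψ hψc)) 0
  rw [Real.fourierInv_eq'] at h
  simpa using h

theorem integral_mul_fourier_comp_smul (f ψ : V → ℂ) {ε : ℝ} (hε : ε ≠ 0) :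
    ∫ x, f x * 𝓕 (fun ξ => ψ (ε • ξ)) x = ∫ u, f (ε • u) * 𝓕 ψ u := by
  have hfourier (u : V) : 𝓕 (fun ξ => ψ (ε • ξ)) (ε • u) =
      |(ε ^ Module.finrank ℝ V)⁻¹| • 𝓕 ψ u := by
    rw [Real.fourier_eq', Real.fourier_eq', ← Measure.integral_comp_smul]
    simp only [inner_smul_left, inner_smul_right, conj_trivial]
  have h := Measure.integral_comp_smul volume (fun x => f x * 𝓕 (fun ξ => ψ (ε • ξ)) x) ε
  simp only [hfourier, mul_smul_comm, integral_smul] at h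
  exact (smul_right_injective ℂ (abs_ne_zero.2 (inv_ne_zero (pow_ne_zero _ hε))) h).symm

theorem fourier_sub_apply {ψ₁ ψ₂ : V → ℂ} (h₁ : Integrable ψ₁) (h₂ : Integrable ψ₂) (x : V) :
    𝓕 (fun ξ => ψ₁ ξ - ψ₂ ξ) x = 𝓕 ψ₁ x - 𝓕 ψ₂ x := by
  simp only [Real.fourier_eq, smul_sub]
  exact integral_sub (VectorFourier.fourierIntegral_convergent_iff Real.continuous_fourierChar
    (L := innerₗ V) continuous_inner x |>.2 h₁) (VectorFourier.fourierIntegral_convergent_iff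
    Real.continuous_fourierChar (L := innerₗ V) continuous_inner x |>.2 h₂)

theorem fourier_sub_eq_fourier_modulation (ψ : V → ℂ) (x u : V) :
    𝓕 ψ (x - u) = 𝓕 (fun ξ => Complex.exp (↑(2 * Real.pi * ⟪ξ, u⟫) * Complex.I) * ψ ξ) x := by
  simp only [Real.fourier_eq', smul_eq_mul, ← mul_assoc, ← Complex.exp_add, ← add_mul,
    inner_sub_right]
  congr! 5
  push_cast
  ring

namespace MemBernstein

variable {Ω : Set V} {f g : V → ℂ}

theorem integrable_mul (hf : MemBernstein Ω f) {K : V → ℂ} (hK : Integrable K) :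
    Integrable fun x => f x * K x :=
  let ⟨hcont, ⟨_, hC⟩, _⟩ := hf
  hK.bdd_mul hcont.aestronglyMeasurable (.of_forall hC)

theorem of_tendsto {F : ℕ → V → ℂ} (hF : ∀ n, MemBernstein Ω (F n)) {C : ℝ}
    (hC : ∀ n x, ‖F n x‖ ≤ C) (hg : Continuous g)
    (hlim : ∀ x, Tendsto (F · x) atTop (nhds (g x))) : MemBernstein Ω g := by
  refine ⟨hg, ⟨C, fun x => le_of_tendsto' (hlim x).norm (hC · x)⟩, fun ψ hψ hψc hψΩ => ?_⟩
  have hψF := integrable_fourier_of_contDiff hψ hψc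
  have h := tendsto_integral_of_dominated_convergence (fun x => C * ‖𝓕 ψ x‖)
    (fun n => ((hF n).integrable_mul hψF).aestronglyMeasurable) (hψF.norm.const_mul C)
    (fun n => .of_forall fun x => by rw [norm_mul]; gcongr; exact hC n x)
    (.of_forall fun x => (hlim x).mul_const (𝓕 ψ x))
  simp only [fun n => (hF n).2.2 ψ hψ hψc hψΩ] at h
  exact tendsto_nhds_unique h tendsto_const_nhds

theorem comp_add_right (hf : MemBernstein Ω f) (u : V) : MemBernstein Ω fun x => f (x + u) := by
  obtain ⟨hcont, ⟨C, hC⟩, hf⟩ := hf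
  refine ⟨by fun_prop, ⟨C, fun x => hC _⟩, fun ψ hψ hψc hψΩ => ?_⟩
  rw [← integral_sub_right_eq_self _ u]
  simp only [sub_add_cancel, fourier_sub_eq_fourier_modulation]
  have hexp : ContDiff ℝ (⊤ : ℕ∞)
      fun ξ : V => Complex.exp (↑(2 * Real.pi * ⟪ξ, u⟫) * Complex.I) :=
    ((Complex.ofRealCLM.contDiff.comp
      (contDiff_const.mul (contDiff_id.inner ℝ contDiff_const))).mul contDiff_const).cexp
  exact hf _ (hexp.mul hψ) hψc.mul_left
    (Set.subset_eq_empty (Set.inter_subset_inter_left _ tsupport_mul_subset_right) hψΩ)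

theorem integral_mul_fourier_congr (hf : MemBernstein Ω f) {ψ₁ ψ₂ : V → ℂ}
    (h₁ : ContDiff ℝ (⊤ : ℕ∞) ψ₁) (h₁c : HasCompactSupport ψ₁)
    (h₂ : ContDiff ℝ (⊤ : ℕ∞) ψ₂) (h₂c : HasCompactSupport ψ₂)
    {U : Set V} (hU : IsOpen U) (hΩU : Ω ⊆ U) (h : Set.EqOn ψ₁ ψ₂ U) :
    ∫ x, f x * 𝓕 ψ₁ x = ∫ x, f x * 𝓕 ψ₂ x := by
  have hdisj : tsupport (fun ξ => ψ₁ ξ - ψ₂ ξ) ∩ Ω = ∅ := by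
    have hsupp : Function.support (fun ξ => ψ₁ ξ - ψ₂ ξ) ⊆ Uᶜ :=
      fun ξ hξ hξU => hξ (sub_eq_zero.2 (h hξU))
    exact (disjoint_compl_left.mono (closure_minimal hsupp hU.isClosed_compl) hΩU).inter_eq
  have h0 := hf.2.2 _ (h₁.sub h₂) (h₁c.sub h₂c) hdisj
  simp only [fourier_sub_apply (h₁.continuous.integrable_of_hasCompactSupport h₁c)
    (h₂.continuous.integrable_of_hasCompactSupport h₂c), mul_sub] at h0
  rwa [integral_sub (hf.integrable_mul (integrable_fourier_of_contDiff h₁ h₁c))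
    (hf.integrable_mul (integrable_fourier_of_contDiff h₂ h₂c)), sub_eq_zero] at h0

/-- The cutoff `ξ ↦ χ (ε • ξ)` may replace `χ`, and then `ε → 0` evaluates `f` at `0`. -/
theorem apply_zero_eq_integral (hf : MemBernstein Ω f) {R : ℝ} (hΩ : Ω ⊆ ball 0 R) {χ : V → ℂ}
    (hχ : ContDiff ℝ (⊤ : ℕ∞) χ) (hχc : HasCompactSupport χ) (hχ1 : ∀ ξ ∈ ball 0 R, χ ξ = 1)
    (hR : 0 < R) : f 0 = ∫ x, f x * 𝓕 χ x := by
  have hχF := integrable_fourier_of_contDiff hχ hχc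
  have hdilate : ∀ ε ∈ Set.Ioo (0 : ℝ) 1,
      ∫ x, f x * 𝓕 χ x = ∫ u, f (ε • u) * 𝓕 χ u := by
    intro ε hε
    rw [← integral_mul_fourier_comp_smul f χ hε.1.ne']
    refine hf.integral_mul_fourier_congr hχ hχc (by fun_prop)
      (hχc.comp_smul hε.1.ne') isOpen_ball hΩ fun ξ hξ => ?_
    rw [hχ1 ξ hξ, hχ1 (ε • ξ)]
    rw [mem_ball_zero_iff] at hξ ⊢
    rw [norm_smul, Real.norm_of_nonneg hε.1.le]
    nlinarith [hε.1, hε.2, norm_nonneg ξ]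
  obtain ⟨hcont, ⟨C, hC⟩, -⟩ := hf
  have hlim : Tendsto (fun ε : ℝ => ∫ u, f (ε • u) * 𝓕 χ u) (nhdsWithin 0 (Set.Ioi 0))
      (nhds (∫ u, f ((0 : ℝ) • u) * 𝓕 χ u)) := by
    refine tendsto_integral_filter_of_dominated_convergence (fun u => C * ‖𝓕 χ u‖)
      (.of_forall fun ε => ?_) (.of_forall fun ε => .of_forall fun u => ?_)
      (hχF.norm.const_mul C) (.of_forall fun u => ?_)
    · exact Continuous.aestronglyMeasurable (by fun_prop) |>.mul hχF.aestronglyMeasurable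
    · rw [norm_mul]
      gcongr
      exact hC _
    · refine Tendsto.mul_const _ (Tendsto.mono_left ?_ nhdsWithin_le_nhds)
      exact Continuous.tendsto (f := fun ε : ℝ => f (ε • u)) (by fun_prop) 0
  simp only [zero_smul, integral_const_mul, integral_fourier_of_contDiff hχ hχc,
    hχ1 0 (mem_ball_self hR), mul_one] at hlim
  refine tendsto_nhds_unique hlim (tendsto_const_nhds.congr' ?_)
  filter_upwards [Ioo_mem_nhdsGT one_pos] with ε hε using hdilate ε hε

end MemBernstein

theorem exists_reproducing_kernel {Ω : Set V} (hΩ : Bornology.IsBounded Ω) :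
    ∃ K : V → ℂ, Integrable K ∧
      ∀ f, MemBernstein Ω f → ∀ x, f x = ∫ y, f (x + y) * K y := by
  obtain ⟨R, hR, hΩR⟩ := hΩ.subset_ball_lt 0 0
  let b : ContDiffBump (0 : V) := ⟨R, R + 1, hR, by linarith⟩
  have hb : ContDiff ℝ (⊤ : ℕ∞) fun ξ => (b ξ : ℂ) :=
    Complex.ofRealCLM.contDiff.comp b.contDiff
  have hbc : HasCompactSupport fun ξ => (b ξ : ℂ) :=
    b.hasCompactSupport.comp_left Complex.ofReal_zero
  refine ⟨𝓕 fun ξ => (b ξ : ℂ), integrable_fourier_of_contDiff hb hbc, fun f hf x => ?_⟩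
  have h := (hf.comp_add_right x).apply_zero_eq_integral hΩR hb hbc
    (fun ξ hξ => by rw [b.one_of_mem_closedBall (ball_subset_closedBall hξ), Complex.ofReal_one]) hR
  simpa only [zero_add, add_zero, add_comm _ x] using h

theorem exists_modulus_of_continuity {Ω : Set V} (hΩ : Bornology.IsBounded Ω) :
    ∃ ω : V → ℝ, Tendsto ω (nhds 0) (nhds 0) ∧
      ∀ f, MemBernstein Ω f → ∀ M, (∀ x, ‖f x‖ ≤ M) → ∀ x u, ‖f (x + u) - f x‖ ≤ M * ω u := by
  obtain ⟨K, hK, hrepr⟩ := exists_reproducing_kernel hΩ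
  refine ⟨fun u => ∫ y, ‖K (-u + y) - K y‖,
    (tendsto_integral_norm_add_sub hK).comp (by simpa using (continuous_neg (G := V)).tendsto 0),
    fun f hf M hM x u => ?_⟩
  have hshift : f (x + u) = ∫ y, f (x + y) * K (-u + y) := by
    rw [hrepr f hf, ← integral_add_left_eq_self _ (-u)]
    simp only [add_assoc, add_neg_cancel_left]
  have hfx := hf.comp_add_right x
  simp only [add_comm _ x] at hfx
  calc ‖f (x + u) - f x‖ = ‖∫ y, f (x + y) * (K (-u + y) - K y)‖ := by
        rw [hshift, hrepr f hf x, ← integral_sub (hfx.integrable_mul (hK.comp_add_left _))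
          (hfx.integrable_mul hK)]
        simp only [mul_sub]
    _ ≤ ∫ y, M * ‖K (-u + y) - K y‖ :=
        norm_integral_le_of_norm_le (((hK.comp_add_left _).sub hK).norm.const_mul M)
          (.of_forall fun y => by rw [norm_mul]; gcongr; exact hM _)
    _ = M * ∫ y, ‖K (-u + y) - K y‖ := integral_const_mul _ _

end BernsteinSpace

section OneParameterGroups

variable {𝔸 : Type*} [NormedRing 𝔸] [NormedAlgebra ℝ 𝔸] [CompleteSpace 𝔸] {T : ℝ → 𝔸}

theorem exists_isUnit_intervalIntegral (hT : Continuous T) (hT0 : T 0 = 1) :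
    ∃ ε : ℝ, IsUnit (∫ t in (0 : ℝ)..ε, T t) := by
  have hslope := hasDerivAt_iff_tendsto_slope_zero.1
    (intervalIntegral.integral_hasDerivAt_right (hT.intervalIntegrable 0 0)
      hT.aestronglyMeasurable.stronglyMeasurableAtFilter hT.continuousAt)
  rw [hT0] at hslope
  have hunit := hslope.eventually (Units.isOpen.mem_nhds (isUnit_one (M := 𝔸)))
  obtain ⟨ε, hε, hε0⟩ := (hunit.and self_mem_nhdsWithin).exists
  rw [zero_add, intervalIntegral.integral_same, sub_zero] at hε
  exact ⟨ε, (isUnit_smul_iff (Units.mk0 ε hε0)⁻¹ _).1 hε⟩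

/-- Smoothing: `T s * J` with `J = ∫ t in 0..ε, T t` is the integral of `T` over `[s, s + ε]`, hence
differentiable in `s`, and `J` is invertible. -/
theorem exists_forall_hasDerivAt_mul (hT : Continuous T) (hT0 : T 0 = 1)
    (hTadd : ∀ s t, T (s + t) = T s * T t) : ∃ a, ∀ s, HasDerivAt T (T s * a) s := by
  obtain ⟨ε, J, hJ⟩ := exists_isUnit_intervalIntegral hT hT0
  have hTJ (s : ℝ) : T s * J = ∫ t in s..(s + ε), T t := by
    have h := (ContinuousLinearMap.mul ℝ 𝔸 (T s)).intervalIntegral_comp_comm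
      (hT.intervalIntegrable (μ := volume) 0 ε)
    simp only [ContinuousLinearMap.mul_apply', ← hTadd, intervalIntegral.integral_comp_add_left,
      add_zero] at h
    rw [hJ, h]
  have hT_eq (s : ℝ) : T s = ((∫ t in (0 : ℝ)..(s + ε), T t) - ∫ t in (0 : ℝ)..s, T t) * ↑J⁻¹ := by
    rw [intervalIntegral.integral_interval_sub_left (hT.intervalIntegrable _ _)
      (hT.intervalIntegrable _ _), ← hTJ, Units.mul_inv_cancel_right]
  refine ⟨(T ε - 1) * ↑J⁻¹, fun s => ?_⟩
  have hderiv (x : ℝ) : HasDerivAt (fun x => ∫ t in (0 : ℝ)..x, T t) (T x) x :=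
    intervalIntegral.integral_hasDerivAt_right (hT.intervalIntegrable 0 x)
      hT.aestronglyMeasurable.stronglyMeasurableAtFilter hT.continuousAt
  have h := (((hderiv (s + ε)).comp_add_const s ε).sub (hderiv s)).mul_const (↑J⁻¹ : 𝔸)
  rw [hTadd, ← mul_sub_one, mul_assoc] at h
  exact h.congr_of_eventuallyEq (.of_forall hT_eq)

theorem exists_forall_eq_exp_smul (hT : Continuous T) (hT0 : T 0 = 1)
    (hTadd : ∀ s t, T (s + t) = T s * T t) : ∃ a, ∀ s, T s = NormedSpace.exp (s • a) := by
  obtain ⟨a, ha⟩ := exists_forall_hasDerivAt_mul hT hT0 hTadd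
  have hconst (s : ℝ) : HasDerivAt (fun s => T s * NormedSpace.exp (s • -a)) 0 s := by
    refine ((ha s).mul (hasDerivAt_exp_smul_const' (-a) s)).congr_deriv ?_
    noncomm_ring
  refine ⟨a, fun s => ?_⟩
  have h := is_const_of_deriv_eq_zero (fun s => (hconst s).differentiableAt)
    (fun s => (hconst s).deriv) s 0
  rw [hT0, zero_smul, NormedSpace.exp_zero, one_mul] at h
  let : NormedAlgebra ℚ 𝔸 := .restrictScalars ℚ ℝ 𝔸
  have hinv : NormedSpace.exp (s • -a) * NormedSpace.exp (s • a) = 1 := by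
    rw [← NormedSpace.exp_add_of_commute (((Commute.refl a).neg_left.smul_left s).smul_right s),
      ← smul_add, neg_add_cancel, smul_zero, NormedSpace.exp_zero]
  rw [← one_mul (NormedSpace.exp (s • a)), ← h, mul_assoc, hinv, mul_one]

theorem norm_exp_le {𝔸 : Type*} [NormedRing 𝔸] [NormedAlgebra ℝ 𝔸] [CompleteSpace 𝔸] (a : 𝔸) :
    ‖NormedSpace.exp a‖ ≤ ‖(1 : 𝔸)‖ * Real.exp ‖a‖ := by
  have hpow (n : ℕ) : ‖a ^ n‖ ≤ ‖(1 : 𝔸)‖ * ‖a‖ ^ n := by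
    induction n with
    | zero => simp
    | succ n ih =>
      rw [pow_succ, pow_succ, ← mul_assoc]
      exact (norm_mul_le _ _).trans (by gcongr)
  rw [NormedSpace.exp_eq_tsum ℝ, Real.exp_eq_exp_ℝ, NormedSpace.exp_eq_tsum ℝ]
  refine tsum_of_norm_bounded
    ((NormedSpace.expSeries_summable' (𝕂 := ℝ) ‖a‖).hasSum.mul_left ‖(1 : 𝔸)‖) fun n => ?_
  rw [norm_smul, Real.norm_of_nonneg (by positivity), smul_eq_mul, mul_left_comm]
  gcongr
  exact hpow n

theorem exists_entire_extension {𝔸 : Type*} [NormedRing 𝔸] [NormedAlgebra ℂ 𝔸] [CompleteSpace 𝔸]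
    {T : ℝ → 𝔸} (hT : Continuous T) (hT0 : T 0 = 1) (hTadd : ∀ s t, T (s + t) = T s * T t) :
    ∃ U : ℂ → 𝔸, Differentiable ℂ U ∧ (∀ s : ℝ, U s = T s) ∧
      ∃ C A, ∀ z, ‖U z‖ ≤ C * Real.exp (A * ‖z‖) := by
  obtain ⟨a, ha⟩ := exists_forall_eq_exp_smul hT hT0 hTadd
  refine ⟨fun z => NormedSpace.exp (z • a),
    fun z => (hasDerivAt_exp_smul_const a z).differentiableAt,
    fun s => by simp only [ha, Complex.coe_smul], ‖(1 : 𝔸)‖, ‖a‖, fun z => ?_⟩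
  rw [mul_comm ‖a‖, ← norm_smul]
  exact norm_exp_le _

end OneParameterGroups

section TranslationOperators

open scoped BoundedContinuousFunction

variable {Ω : Set V}

theorem MemBernstein.exists_norm_le {f : V → ℂ} (hf : MemBernstein Ω f) : ∃ C, ∀ x, ‖f x‖ ≤ C :=
  hf.2.1

theorem MemBernstein.add {f g : V → ℂ} (hf : MemBernstein Ω f) (hg : MemBernstein Ω g) :
    MemBernstein Ω fun x => f x + g x := by
  obtain ⟨C, hC⟩ := hf.exists_norm_le
  obtain ⟨D, hD⟩ := hg.exists_norm_le
  refine ⟨hf.1.add hg.1, ⟨C + D, fun x => norm_add_le_of_le (hC x) (hD x)⟩,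
    fun ψ hψ hψc hψΩ => ?_⟩
  have hψF := integrable_fourier_of_contDiff hψ hψc
  simp only [add_mul]
  rw [integral_add (hf.integrable_mul hψF) (hg.integrable_mul hψF), hf.2.2 ψ hψ hψc hψΩ,
    hg.2.2 ψ hψ hψc hψΩ, add_zero]

theorem MemBernstein.const_mul {f : V → ℂ} (hf : MemBernstein Ω f) (c : ℂ) :
    MemBernstein Ω fun x => c * f x := by
  obtain ⟨C, hC⟩ := hf.exists_norm_le
  refine ⟨hf.1.const_mul c, ⟨‖c‖ * C, fun x => ?_⟩, fun ψ hψ hψc hψΩ => ?_⟩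
  · rw [norm_mul]
    gcongr
    exact hC x
  · simp only [mul_assoc, integral_const_mul, hf.2.2 ψ hψ hψc hψΩ, mul_zero]

variable (Ω) in
/-- The Bernstein space `B_Ω` as a space of bounded continuous functions, with the sup norm. -/
def bernsteinSpace : Submodule ℂ (V →ᵇ ℂ) where
  carrier := {f | MemBernstein Ω f}
  add_mem' hf hg := hf.add hg
  zero_mem' := ⟨continuous_zero, ⟨0, by simp⟩, by simp⟩
  smul_mem' c _ hf := hf.const_mul c

instance : CompleteSpace (bernsteinSpace Ω) := by
  have hclosed : IsClosed (bernsteinSpace Ω : Set (V →ᵇ ℂ)) := by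
    refine isClosed_of_closure_subset fun g hg => ?_
    obtain ⟨F, hF, hlim⟩ := mem_closure_iff_seq_limit.1 hg
    obtain ⟨C, hC⟩ := hlim.norm.bddAbove_range
    refine MemBernstein.of_tendsto hF (fun n x => ((F n).norm_coe_le_norm x).trans
      (hC (Set.mem_range_self n))) g.continuous fun x => ?_
    exact ((BoundedContinuousFunction.evalCLM ℂ x).continuous.tendsto g).comp hlim
  exact hclosed.completeSpace_coe

/-- Translation `f ↦ f (· + u)`, as a bounded operator on `B_Ω`. -/
def bernsteinTranslation (Ω : Set V) (u : V) : bernsteinSpace Ω →L[ℂ] bernsteinSpace Ω :=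
  LinearMap.mkContinuous
    { toFun f := ⟨f.1.compContinuous (ContinuousMap.addRight u), f.2.comp_add_right u⟩
      map_add' _ _ := rfl
      map_smul' _ _ := rfl } 1 fun f => by
    rw [one_mul]
    exact f.1.norm_compContinuous_le _

@[simp]
theorem bernsteinTranslation_apply_apply (u : V) (f : bernsteinSpace Ω) (x : V) :
    (bernsteinTranslation Ω u f).1 x = f.1 (x + u) := rfl

theorem bernsteinTranslation_zero : bernsteinTranslation Ω 0 = 1 := by
  ext f x
  simp

theorem bernsteinTranslation_add (u v : V) : bernsteinTranslation Ω (u + v) =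
    bernsteinTranslation Ω u * bernsteinTranslation Ω v := by
  ext f x
  simp [add_assoc]

theorem continuous_bernsteinTranslation (hΩ : Bornology.IsBounded Ω) :
    Continuous (bernsteinTranslation Ω) := by
  obtain ⟨ω, hω, hmod⟩ := exists_modulus_of_continuity hΩ
  have hnorm (u u₀ : V) :
      ‖bernsteinTranslation Ω u - bernsteinTranslation Ω u₀‖ ≤ |ω (u - u₀)| := by
    refine ContinuousLinearMap.opNorm_le_bound _ (abs_nonneg _) fun f => ?_
    rw [mul_comm]
    refine (BoundedContinuousFunction.norm_le (by positivity)).2 fun x => ?_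
    have h := hmod f.1 f.2 ‖f‖ f.1.norm_coe_le_norm (x + u₀) (u - u₀)
    rw [add_add_sub_cancel] at h
    exact h.trans (by gcongr; exact le_abs_self _)
  refine continuous_iff_continuousAt.2 fun u₀ => (tendsto_iff_norm_sub_tendsto_zero
    (E := bernsteinSpace Ω →L[ℂ] bernsteinSpace Ω)).2 ?_
  refine squeeze_zero (fun u => norm_nonneg (bernsteinTranslation Ω u - _)) (hnorm · u₀) ?_
  rw [← abs_zero]
  exact (hω.comp ((continuous_sub_right u₀).tendsto' u₀ 0 (sub_self u₀))).abs

theorem exists_entire_bernsteinTranslation (hΩ : Bornology.IsBounded Ω) (u : V) :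
    ∃ U : ℂ → bernsteinSpace Ω →L[ℂ] bernsteinSpace Ω, Differentiable ℂ U ∧
      (∀ s : ℝ, U s = bernsteinTranslation Ω (s • u)) ∧
      ∃ C A, ∀ z, ‖U z‖ ≤ C * Real.exp (A * ‖z‖) :=
  exists_entire_extension (T := fun s : ℝ => bernsteinTranslation Ω (s • u))
    ((continuous_bernsteinTranslation hΩ).comp (by fun_prop))
    (by rw [zero_smul, bernsteinTranslation_zero])
    fun s t => by rw [add_smul, bernsteinTranslation_add]

end TranslationOperators

section Uniqueness

theorem eq_zero_of_forall_ofReal {F : ℂ → ℂ} (hF : Differentiable ℂ F) (h : ∀ t : ℝ, F t = 0) :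
    F = 0 := by
  have hreal : Tendsto (fun t : ℝ => (t : ℂ)) (nhdsWithin 0 {0}ᶜ) (nhdsWithin 0 {0}ᶜ) :=
    Complex.continuous_ofReal.continuousWithinAt.tendsto_nhdsWithin fun t ht =>
      Complex.ofReal_ne_zero.2 ht
  exact AnalyticOnNhd.eq_of_frequently_eq (z₀ := 0) (fun z _ => hF.analyticAt z)
    (fun z _ => analyticAt_const) (hreal.frequently (.of_forall h))

theorem exists_cos_eq_and_sin_eq {z w : ℂ} (h : z ^ 2 + w ^ 2 = 1) :
    ∃ θ : ℂ, Complex.cos θ = z ∧ Complex.sin θ = w := by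
  obtain ⟨θ, rfl⟩ := Complex.cos_surjective z
  obtain hw | hw : w = Complex.sin θ ∨ w = -Complex.sin θ := by
    rw [← sq_eq_sq_iff_eq_or_eq_neg]
    linear_combination h - Complex.sin_sq_add_cos_sq θ
  · exact ⟨θ, rfl, hw.symm⟩
  · exact ⟨-θ, Complex.cos_neg θ, by rw [Complex.sin_neg, hw]⟩

theorem add_smul_add_add_smul_mem_sphere {E : Type*} [NormedAddCommGroup E]
    [InnerProductSpace ℝ E] {e e' : E} (he : ‖e‖ = 1) (he' : ‖e'‖ = 1) (hee' : ⟪e, e'⟫ = 0)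
    {r : ℝ} (hr : 0 ≤ r) (α β t : ℝ) :
    (α + r * Real.cos t) • e + (β + r * Real.sin t) • e' ∈ sphere (α • e + β • e') r := by
  have hsq : ‖(r * Real.cos t) • e + (r * Real.sin t) • e'‖ ^ 2 = r ^ 2 := by
    rw [norm_add_sq_real, norm_smul, norm_smul, inner_smul_left, inner_smul_right, hee', he,
      he', mul_one, mul_one, Real.norm_eq_abs, Real.norm_eq_abs, sq_abs, sq_abs]
    linear_combination r ^ 2 * Real.cos_sq_add_sin_sq t
  rw [mem_sphere_iff_norm, ← pow_left_inj₀ (norm_nonneg _) hr two_ne_zero, ← hsq]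
  congr 2
  module

variable {Ω : Set V}

/-- The parametrization `(α + r cos θ, β + r sin θ)` of the circle is entire in `θ`, and complex `θ`
reach every point of the complexified circle. -/
theorem apply_apply_zero_eq_zero_of_eqOn_sphere
    {U U' : ℂ → bernsteinSpace Ω →L[ℂ] bernsteinSpace Ω} {e e' : V} (he : ‖e‖ = 1)
    (he' : ‖e'‖ = 1) (hee' : ⟪e, e'⟫ = 0) (hU : Differentiable ℂ U) (hU' : Differentiable ℂ U')
    (hUe : ∀ s : ℝ, U s = bernsteinTranslation Ω (s • e))
    (hUe' : ∀ s : ℝ, U' s = bernsteinTranslation Ω (s • e')) {f : bernsteinSpace Ω} {α β r : ℝ}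
    (hr : 0 < r) (hf : ∀ x ∈ sphere (α • e + β • e') r, f.1 x = 0) {z w : ℂ}
    (hzw : (z - α) ^ 2 + (w - β) ^ 2 = r ^ 2) : (U z (U' w f)).1 0 = 0 := by
  have hr' : (r : ℂ) ≠ 0 := Complex.ofReal_ne_zero.2 hr.ne'
  obtain ⟨θ, hcos, hsin⟩ := exists_cos_eq_and_sin_eq (z := (z - α) / r) (w := (w - β) / r) (by
    rw [div_pow, div_pow, ← add_div, hzw, div_self (pow_ne_zero 2 hr')])
  let F : ℂ → ℂ := fun θ =>
    (U (α + r * Complex.cos θ) (U' (β + r * Complex.sin θ) f)).1 0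
  have hF : Differentiable ℂ F := by
    have hcirc₁ : Differentiable ℂ fun θ : ℂ => α + r * Complex.cos θ := by fun_prop
    have hcirc₂ : Differentiable ℂ fun θ : ℂ => β + r * Complex.sin θ := by fun_prop
    exact ((BoundedContinuousFunction.evalCLM ℂ 0).comp
      (bernsteinSpace Ω).subtypeL).differentiable.comp ((hU.comp hcirc₁).clm_apply
        ((hU'.comp hcirc₂).clm_apply (differentiable_const f)))
  have hFreal (t : ℝ) : F t = 0 := by
    have hF_eq : F t = f.1 ((α + r * Real.cos t) • e + (β + r * Real.sin t) • e') := by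
      have hUt := hUe (α + r * Real.cos t)
      have hUt' := hUe' (β + r * Real.sin t)
      push_cast at hUt hUt'
      simp only [F, hUt, hUt', bernsteinTranslation_apply_apply, zero_add]
    rw [hF_eq, hf _ (add_smul_add_add_smul_mem_sphere he he' hee' hr.le α β t)]
  have hFθ := congrFun (eq_zero_of_forall_ofReal hF hFreal) θ
  simpa only [F, Pi.zero_apply, hcos, hsin, mul_div_cancel₀ _ hr', add_sub_cancel] using hFθ

theorem apply_zero_eq_zero_of_eqOn_sphere (hΩ : Bornology.IsBounded Ω)
    {U : ℂ → bernsteinSpace Ω →L[ℂ] bernsteinSpace Ω} {e : V} (he : ‖e‖ = 1)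
    (hU : Differentiable ℂ U) (hUe : ∀ s : ℝ, U s = bernsteinTranslation Ω (s • e))
    {f : bernsteinSpace Ω} {c : V} {r : ℝ} (hr : 0 < r) (hf : ∀ x ∈ sphere c r, f.1 x = 0) {z : ℂ}
    (hre : z.re = ⟪e, c⟫) (him : z.im ^ 2 + r ^ 2 = ‖c - z.re • e‖ ^ 2) : (U z f).1 0 = 0 := by
  set β := ‖c - z.re • e‖
  have hβ : β ≠ 0 := by
    intro h
    rw [h] at him
    nlinarith [sq_nonneg z.im, sq_pos_of_pos hr]
  have hee' : ⟪e, β⁻¹ • (c - z.re • e)⟫ = 0 := by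
    rw [inner_smul_right, inner_sub_right, inner_smul_right, real_inner_self_eq_norm_sq, he, hre]
    ring
  obtain ⟨U', hU', hUe', -⟩ :=
    exists_entire_bernsteinTranslation hΩ (β⁻¹ • (c - z.re • e))
  have hc : z.re • e + β • β⁻¹ • (c - z.re • e) = c := by
    rw [smul_inv_smul₀ hβ, add_sub_cancel]
  have h := apply_apply_zero_eq_zero_of_eqOn_sphere (z := z) (w := 0) he
    (norm_smul_inv_norm (norm_ne_zero_iff.1 hβ)) hee' hU hU' hUe hUe' hr (hc ▸ hf) (by
      have hz : z - z.re = z.im * Complex.I := by rw [sub_eq_iff_eq_add', Complex.re_add_im]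
      have him' := congrArg ((↑) : ℝ → ℂ) him
      push_cast at him'
      rw [hz, mul_pow, Complex.I_sq]
      linear_combination -him')
  have hU'0 : U' 0 = 1 := by
    rw [← Complex.ofReal_zero, hUe', zero_smul, bernsteinTranslation_zero]
  rwa [hU'0, one_apply_eq_self] at h

theorem abs_norm_sub_inner_smul_sub_le {E : Type*} [NormedAddCommGroup E] [InnerProductSpace ℝ E]
    {e e' : E} (he : ‖e‖ = 1) (he' : ‖e'‖ = 1) (hee' : ⟪e, e'⟫ = 0) (c : E) (t : ℝ) {m : ℝ}
    (hm : 0 ≤ m) : |‖c - ⟪e, c⟫ • e‖ - m| ≤ 2 * ‖c - (t • e + m • e')‖ := by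
  set d := c - (t • e + m • e') with hd
  have hed : ⟪e, d⟫ = ⟪e, c⟫ - t := by
    simp [hd, inner_sub_right, inner_add_right, inner_smul_right, hee', he]
  have hdecomp : c - ⟪e, c⟫ • e - m • e' = d - ⟪e, d⟫ • e := by
    rw [hed, hd]
    module
  calc |‖c - ⟪e, c⟫ • e‖ - m| = |‖c - ⟪e, c⟫ • e‖ - ‖m • e'‖| := by
        rw [norm_smul, he', mul_one, Real.norm_of_nonneg hm]
    _ ≤ ‖d - ⟪e, d⟫ • e‖ := hdecomp ▸ abs_norm_sub_norm_le _ _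
    _ ≤ ‖d‖ + ‖e‖ * ‖d‖ * ‖e‖ := by
        refine (norm_sub_le _ _).trans ?_
        rw [norm_smul]
        gcongr
        exact norm_inner_le_norm e d
    _ = 2 * ‖d‖ := by rw [he]; ring

theorem exists_sq_add_sq_eq_and_abs_sub_le {y r β ρ : ℝ} (hr : 0 ≤ r) (hβ : |y| + r ≤ β)
    (hβρ : β ≤ |y| + ρ) : ∃ s, s ^ 2 + r ^ 2 = β ^ 2 ∧ |s - y| ≤ ρ := by
  have hy := abs_nonneg y
  have hsqrt_le : √(β ^ 2 - r ^ 2) ≤ β := Real.sqrt_le_iff.2 ⟨by linarith, by nlinarith⟩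
  have hsqrt_ge : |y| ≤ √(β ^ 2 - r ^ 2) := Real.le_sqrt_of_sq_le (by nlinarith)
  have hsq : √(β ^ 2 - r ^ 2) ^ 2 + r ^ 2 = β ^ 2 := by
    rw [Real.sq_sqrt (by nlinarith), sub_add_cancel]
  rcases abs_cases y with ⟨h, -⟩ | ⟨h, -⟩
  · exact ⟨_, hsq, abs_le.2 ⟨by linarith, by linarith⟩⟩
  · exact ⟨-_, by rwa [neg_sq], abs_le.2 ⟨by linarith, by linarith⟩⟩

theorem RelativelyDense.setOf_im_sq_add_sq_eq {E : Type*} [NormedAddCommGroup E]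
    [InnerProductSpace ℝ E] {W : Set E} (hW : RelativelyDense W) {e e' : E} (he : ‖e‖ = 1)
    (he' : ‖e'‖ = 1) (hee' : ⟪e, e'⟫ = 0) {r : ℝ} (hr : 0 ≤ r) :
    RelativelyDense {z : ℂ | ∃ c ∈ W, z.re = ⟪e, c⟫ ∧
      z.im ^ 2 + r ^ 2 = ‖c - z.re • e‖ ^ 2} := by
  obtain ⟨R, hRpos, hR⟩ := hW.exists_pos
  refine ⟨R + (4 * R + r), fun z => ?_⟩
  -- The offset `2 * R + r` puts `c` at distance at least `|z.im| + r` from the line `ℝ e`.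
  obtain ⟨c, hcW, hc⟩ := hR (z.re • e + (|z.im| + (2 * R + r)) • e')
  rw [dist_eq_norm] at hc
  have hre : |⟪e, c⟫ - z.re| ≤ R := by
    have h := abs_real_inner_le_norm e (c - (z.re • e + (|z.im| + (2 * R + r)) • e'))
    rw [inner_sub_right, inner_add_right, inner_smul_right, inner_smul_right, hee',
      real_inner_self_eq_norm_sq, he, one_pow, mul_one, mul_zero, add_zero, one_mul] at h
    exact h.trans hc
  obtain ⟨hle, hge⟩ := abs_le.1 (abs_norm_sub_inner_smul_sub_le he he' hee' c z.re
    (m := |z.im| + (2 * R + r)) (by positivity))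
  obtain ⟨s, hs, him⟩ := exists_sq_add_sq_eq_and_abs_sub_le (y := z.im)
    (β := ‖c - ⟪e, c⟫ • e‖) (ρ := 4 * R + r) hr (by linarith) (by linarith)
  refine ⟨⟨⟪e, c⟫, s⟩, ⟨c, hcW, rfl, hs⟩, ?_⟩
  rw [Complex.dist_eq]
  exact (Complex.norm_le_abs_re_add_abs_im _).trans (add_le_add hre him)

theorem exists_norm_eq_one_inner_eq_zero {E : Type*} [NormedAddCommGroup E]
    [InnerProductSpace ℝ E] (hE : 1 < Module.finrank ℝ E) :
    ∃ e e' : E, ‖e‖ = 1 ∧ ‖e'‖ = 1 ∧ ⟪e, e'⟫ = 0 := by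
  have := Module.finite_of_finrank_pos (zero_lt_one.trans hE)
  have h := (stdOrthonormalBasis ℝ E).orthonormal
  exact ⟨_, _, h.1 ⟨0, by lia⟩, h.1 ⟨1, hE⟩, h.2 (by simp)⟩

theorem MemBernstein.apply_zero_eq_zero_of_relativelyDense (hV : 1 < Module.finrank ℝ V)
    (hΩ : Bornology.IsBounded Ω) {f : V → ℂ} (hf : MemBernstein Ω f) {r : ℝ} (hr : 0 < r)
    (hW : RelativelyDense {v | ∀ x ∈ sphere v r, f x = 0}) : f 0 = 0 := by
  obtain ⟨e, e', he, he', hee'⟩ := exists_norm_eq_one_inner_eq_zero hV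
  obtain ⟨U, hU, hUe, C, A, hbound⟩ := exists_entire_bernsteinTranslation hΩ e
  obtain ⟨D, hD⟩ := hf.exists_norm_le
  let F : bernsteinSpace Ω := ⟨.ofNormedAddCommGroup f hf.1 D hD, hf⟩
  let L := (BoundedContinuousFunction.evalCLM ℂ 0).comp (bernsteinSpace Ω).subtypeL
  have hG : (fun z => L (U z F)) = 0 := by
    refine eq_zero_of_relativelyDense_zeros (A := A) (C := ‖L‖ * (C * ‖F‖))
      (L.differentiable.comp (hU.clm_apply (differentiable_const F))) (fun z => ?_) ?_
    · calc ‖L (U z F)‖ ≤ ‖L‖ * (‖U z‖ * ‖F‖) := L.le_opNorm_of_le ((U z).le_opNorm F)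
        _ ≤ ‖L‖ * (C * Real.exp (A * ‖z‖) * ‖F‖) := by gcongr; exact hbound z
        _ = ‖L‖ * (C * ‖F‖) * Real.exp (A * ‖z‖) := by ring
    · obtain ⟨R, hR⟩ := hW.setOf_im_sq_add_sq_eq he he' hee' hr.le
      refine ⟨R, fun z => ?_⟩
      obtain ⟨w, ⟨c, hc, hre, him⟩, hwz⟩ := hR z
      exact ⟨w, apply_zero_eq_zero_of_eqOn_sphere (f := F) hΩ he hU hUe hr hc hre him, hwz⟩
  have h := congrFun hG 0
  simp only [← Complex.ofReal_zero, hUe, zero_smul, bernsteinTranslation_zero] at h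
  exact h

theorem MemBernstein.eq_zero_of_relativelyDense (hV : 1 < Module.finrank ℝ V)
    (hΩ : Bornology.IsBounded Ω) {f : V → ℂ} (hf : MemBernstein Ω f) {r : ℝ} (hr : 0 < r)
    (hW : RelativelyDense {v | ∀ x ∈ sphere v r, f x = 0}) : f = 0 := by
  funext u
  have h := (hf.comp_add_right u).apply_zero_eq_zero_of_relativelyDense hV hΩ hr (by
    obtain ⟨R, hR⟩ := hW
    refine ⟨R, fun x => ?_⟩
    obtain ⟨v, hv, hvx⟩ := hR (x + u)
    refine ⟨v - u, fun y hy => hv _ ?_, ?_⟩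
    · rwa [mem_sphere_iff_norm, sub_sub_eq_add_sub, ← mem_sphere_iff_norm] at hy
    · rwa [dist_eq_norm, sub_sub, add_comm, ← dist_eq_norm])
  simpa using h

end Uniqueness

section Compactness

theorem isCompact_setOf_norm_le_and_modulus {E F : Type*} [SeminormedAddCommGroup E]
    [NormedAddCommGroup F] [ProperSpace F] {ω : E → ℝ} (hω : Tendsto ω (nhds 0) (nhds 0)) (M : ℝ) :
    IsCompact {f : C(E, F) | (∀ x, ‖f x‖ ≤ M) ∧ ∀ x u, ‖f (x + u) - f x‖ ≤ ω u} := by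
  have hmod (x₀ : E) : Tendsto (fun x => ω (x - x₀)) (nhds x₀) (nhds 0) :=
    hω.comp ((continuous_sub_right x₀).tendsto' x₀ 0 (sub_self x₀))
  have hdist {f : E → F} (hf : ∀ x u, ‖f (x + u) - f x‖ ≤ ω u) (x₀ x : E) :
      dist (f x₀) (f x) ≤ ω (x - x₀) := by
    have h := hf x₀ (x - x₀)
    rwa [add_sub_cancel, ← dist_eq_norm, dist_comm] at h
  refine ArzelaAscoli.isCompact_of_equicontinuous _ ?_ fun x₀ =>
    Metric.equicontinuousAt_of_continuity_modulus _ (hmod x₀) _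
      (.of_forall fun x f => hdist f.2.2 x₀ x)
  have himage : ContinuousMap.toFun ''
      {f : C(E, F) | (∀ x, ‖f x‖ ≤ M) ∧ ∀ x u, ‖f (x + u) - f x‖ ≤ ω u} =
      Set.univ.pi (fun _ => closedBall 0 M) ∩ ⋂ (x) (u), {f | ‖f (x + u) - f x‖ ≤ ω u} := by
    ext f
    simp only [Set.mem_image, Set.mem_ofPred_eq, Set.mem_inter_iff, Set.mem_univ_pi,
      mem_closedBall_zero_iff, Set.mem_iInter]
    refine ⟨by rintro ⟨f, hf, rfl⟩; exact hf, fun hf => ⟨⟨f, ?_⟩, hf, rfl⟩⟩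
    exact continuous_iff_continuousAt.2 fun x₀ => tendsto_iff_dist_tendsto_zero.2
      (squeeze_zero (fun _ => dist_nonneg) (fun x => dist_comm (f x₀) _ ▸ hdist hf.2 x₀ x)
        (hmod x₀))
  rw [himage]
  exact (isCompact_univ_pi fun _ => isCompact_closedBall 0 M).inter_right
    (isClosed_iInter fun x => isClosed_iInter fun u => isClosed_le (by fun_prop) continuous_const)

variable {Ω : Set V}

theorem MemBernstein.exists_subseq_tendstoLocallyUniformly (hΩ : Bornology.IsBounded Ω)
    {F : ℕ → V → ℂ} (hF : ∀ n, MemBernstein Ω (F n)) {M : ℝ} (hM : ∀ n x, ‖F n x‖ ≤ M) :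
    ∃ g, MemBernstein Ω g ∧
      ∃ φ : ℕ → ℕ, StrictMono φ ∧ TendstoLocallyUniformly (fun n => F (φ n)) g atTop := by
  obtain ⟨ω, hω, hmod⟩ := exists_modulus_of_continuity hΩ
  have hMω : Tendsto (fun u => M * ω u) (nhds 0) (nhds 0) := by
    simpa only [mul_zero] using hω.const_mul M
  obtain ⟨g, -, φ, hφ, hlim⟩ := (isCompact_setOf_norm_le_and_modulus hMω M).isSeqCompact
    (x := fun n => ⟨F n, (hF n).1⟩) fun n => ⟨hM n, hmod _ (hF n) M (hM n)⟩
  have hlim' := ContinuousMap.tendsto_iff_tendstoLocallyUniformly.1 hlim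
  exact ⟨g, .of_tendsto (fun n => hF (φ n)) (fun n => hM (φ n)) g.continuous
    fun x => hlim'.tendsto_comp g.continuous.continuousAt tendsto_const_nhds, φ, hφ, hlim'⟩

theorem relativelyDense_setOf_eqOn_sphere_of_tendstoLocallyUniformly {E G : Type*}
    [NormedAddCommGroup E] [ProperSpace E] [NormedAddCommGroup G] {F : ℕ → E → G} {g : E → G}
    (hFg : TendstoLocallyUniformly F g atTop) (hg : Continuous g) {ε : ℕ → ℝ}
    (hε : Tendsto ε atTop (nhds 0)) {R r : ℝ}
    (hF : ∀ n x, ∃ v, dist v x ≤ R ∧ ∀ y ∈ sphere v r, ‖F n y‖ ≤ ε n) :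
    RelativelyDense {v | ∀ y ∈ sphere v r, g y = 0} := by
  refine ⟨R, fun x => ?_⟩
  choose v hvx hv using fun n => hF n x
  obtain ⟨w, hwx, φ, hφ, hlim⟩ := (isCompact_closedBall x R).tendsto_subseq hvx
  refine ⟨w, fun y hy => ?_, hwx⟩
  have hy_lim : Tendsto (fun n => v (φ n) + (y - w)) atTop (nhds y) := by
    simpa only [Function.comp_apply, add_sub_cancel] using hlim.add_const (y - w)
  have hFy : Tendsto (fun n => F (φ n) (v (φ n) + (y - w))) atTop (nhds (g y)) :=
    TendstoLocallyUniformly.tendsto_comp (fun U hU z => (hFg U hU z).imp fun t ht =>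
      ht.imp_right hφ.tendsto_atTop.eventually) hg.continuousAt hy_lim
  have hzero : Tendsto (fun n => F (φ n) (v (φ n) + (y - w))) atTop (nhds 0) :=
    squeeze_zero_norm (fun n => hv (φ n) _ (by simpa using hy)) (hε.comp hφ.tendsto_atTop)
  exact tendsto_nhds_unique hFy hzero

theorem exists_of_not_isSamplingSet {P : Set V} (hP : ¬IsSamplingSet Ω P) {ε : ℝ} (hε : 0 < ε) :
    ∃ f, MemBernstein Ω f ∧ (∀ x, ‖f x‖ ≤ 1) ∧ 1 / 2 ≤ ‖f 0‖ ∧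
      ∃ u, ∀ p ∈ P, ‖f (p - u)‖ ≤ ε := by
  simp only [IsSamplingSet, not_exists, not_and, not_forall, not_le] at hP
  obtain ⟨f, hf, x₀, hx₀⟩ := hP ε⁻¹ (inv_pos.2 hε)
  have hbdd : BddAbove (Set.range fun x => ‖f x‖) :=
    hf.exists_norm_le.imp fun C hC => Set.forall_mem_range.2 hC
  set M := ⨆ x, ‖f x‖
  have hfM (x : V) : ‖f x‖ ≤ M := le_ciSup hbdd x
  have hsSup : 0 ≤ sSup ((fun p => ‖f p‖) '' P) :=
    Real.sSup_nonneg (Set.forall_mem_image.2 fun p _ => norm_nonneg (f p))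
  have hMpos : 0 < M := (mul_nonneg (inv_nonneg.2 hε.le) hsSup).trans_lt (hx₀.trans_le (hfM x₀))
  obtain ⟨u, hu⟩ := exists_lt_of_lt_ciSup (half_lt_self hMpos)
  have hnorm (x : V) : ‖(M⁻¹ : ℂ) * f (x + u)‖ = ‖f (x + u)‖ / M := by
    rw [norm_mul, norm_inv, Complex.norm_of_nonneg hMpos.le, div_eq_inv_mul]
  refine ⟨fun x => (M⁻¹ : ℂ) * f (x + u), (hf.comp_add_right u).const_mul _, fun x => ?_, ?_, u,
    fun p hp => ?_⟩
  · rw [hnorm, div_le_one hMpos]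
    exact hfM _
  · rw [hnorm, zero_add, le_div_iff₀ hMpos]
    linarith
  · rw [hnorm, sub_add_cancel, div_le_iff₀ hMpos]
    calc ‖f p‖ ≤ sSup ((fun p => ‖f p‖) '' P) :=
          le_csSup (hbdd.mono (Set.image_subset_range _ _)) (Set.mem_image_of_mem _ hp)
      _ ≤ ε * M := ((inv_mul_lt_iff₀ hε).1 (hx₀.trans_le (hfM x₀))).le

theorem isSamplingSet_add_sphere (hV : 1 < Module.finrank ℝ V) (hΩ : Bornology.IsBounded Ω)
    {Λ : Set V} (hΛ : RelativelyDense Λ) {r : ℝ} (hr : 0 < r) :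
    IsSamplingSet Ω (Λ + sphere 0 r) := by
  by_contra hP
  choose f hf hf1 hf0 u hu using fun n : ℕ =>
    exists_of_not_isSamplingSet hP (Nat.one_div_pos_of_nat (α := ℝ) (n := n))
  obtain ⟨g, hg, φ, hφ, hlim⟩ := MemBernstein.exists_subseq_tendstoLocallyUniformly hΩ hf hf1
  have hdense : RelativelyDense {v | ∀ x ∈ sphere v r, g x = 0} := by
    obtain ⟨R, hR⟩ := hΛ
    refine relativelyDense_setOf_eqOn_sphere_of_tendstoLocallyUniformly hlim hg.1
      (tendsto_one_div_add_atTop_nhds_zero_nat.comp hφ.tendsto_atTop) (R := R) fun n x => ?_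
    obtain ⟨v, hv, hvx⟩ := hR (x + u (φ n))
    refine ⟨v - u (φ n), ?_, fun y hy => ?_⟩
    · rwa [dist_eq_norm, sub_sub, add_comm, ← dist_eq_norm]
    · have h := hu (φ n) (v + (y + u (φ n) - v)) (Set.add_mem_add hv ?_)
      · simpa using h
      · rwa [mem_sphere_zero_iff_norm, ← sub_sub_eq_add_sub, ← mem_sphere_iff_norm]
  have hg0 : 1 / 2 ≤ ‖g 0‖ := ge_of_tendsto'
    (hlim.tendsto_comp hg.1.continuousAt tendsto_const_nhds).norm fun n => hf0 (φ n)
  rw [hg.eq_zero_of_relativelyDense hV hΩ hr hdense] at hg0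
  norm_num at hg0

end Compactness

section SamplingSetDensity

variable {Ω : Set V}

theorem memBernstein_fourierInv {h : V → ℂ} (hh : Integrable h) (hhΩ : Function.support h ⊆ Ω) :
    MemBernstein Ω (𝓕⁻ h) := by
  have hinv : 𝓕⁻ h = fun x => 𝓕 h (-x) := funext (Real.fourierInv_eq_fourier_neg h)
  refine ⟨?_, ⟨∫ ξ, ‖h ξ‖, fun x => ?_⟩, fun ψ hψ hψc hψΩ => ?_⟩
  · rw [hinv]
    exact (VectorFourier.fourierIntegral_continuous Real.continuous_fourierChar continuous_inner
      (L := innerₗ V) hh).comp continuous_neg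
  · rw [hinv]
    exact VectorFourier.norm_fourierIntegral_le_integral_norm _ _ _ _ _
  · have hflip : ∫ x, 𝓕⁻ h x * 𝓕 ψ x = ∫ ξ, h ξ * 𝓕⁻ (𝓕 ψ) ξ := by
      simpa [Real.fourierInv_eq, VectorFourier.fourierIntegral, real_inner_comm] using!
        VectorFourier.integral_fourierIntegral_smul_eq_flip (L := -innerₗ V)
          Real.continuous_fourierChar (by simpa using! continuous_inner.neg) hh
          (integrable_fourier_of_contDiff hψ hψc)
    rw [hflip, hψ.continuous.fourierInv_fourier_eq
      (hψ.continuous.integrable_of_hasCompactSupport hψc) (integrable_fourier_of_contDiff hψ hψc)]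
    refine integral_eq_zero_of_ae (.of_forall fun ξ => mul_eq_zero.2 (or_iff_not_imp_left.2 ?_))
    refine fun hξ => image_eq_zero_of_notMem_tsupport fun hξψ => ?_
    exact Set.notMem_empty ξ (hψΩ ▸ ⟨hξψ, hhΩ hξ⟩)

theorem IsSamplingSet.relativelyDense_of_tendsto_zero {P : Set V} (hP : IsSamplingSet Ω P)
    {g : V → ℂ} (hg : MemBernstein Ω g) (hlim : Tendsto g (cocompact V) (nhds 0)) {x₀ : V}
    (hx₀ : g x₀ ≠ 0) : RelativelyDense P := by
  obtain ⟨C, hC, hP⟩ := hP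
  have hδ : 0 < ‖g x₀‖ / (2 * C) := by positivity
  obtain ⟨R, hR⟩ : ∃ R, ∀ y, R < ‖y - x₀‖ → ‖g y‖ < ‖g x₀‖ / (2 * C) := by
    have h := hlim.norm.eventually_lt_const (norm_zero.trans_lt hδ)
    rw [← comap_dist_left_atTop_eq_cocompact x₀, eventually_comap] at h
    obtain ⟨R, hR⟩ := (eventually_atTop.1 h)
    exact ⟨R, fun y hy => hR _ hy.le y (dist_eq_norm' x₀ y)⟩
  refine ⟨R, fun x => ?_⟩
  by_contra! hfar
  have hsup : sSup ((fun p => ‖g (p + (x₀ - x))‖) '' P) ≤ ‖g x₀‖ / (2 * C) := by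
    refine Real.sSup_le (Set.forall_mem_image.2 fun p hp => (hR _ ?_).le) hδ.le
    simpa [dist_eq_norm, add_sub_right_comm] using hfar p hp
  have h := hP _ (hg.comp_add_right (x₀ - x)) x
  rw [add_sub_cancel] at h
  have hhalf : ‖g x₀‖ ≤ ‖g x₀‖ / 2 :=
    calc ‖g x₀‖ ≤ C * (‖g x₀‖ / (2 * C)) := h.trans (by gcongr)
      _ = ‖g x₀‖ / 2 := by field_simp
  linarith [norm_pos_iff.2 hx₀]

theorem IsSamplingSet.relativelyDense {P : Set V} (hP : IsSamplingSet Ω P)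
    (hΩ : MeasurableSet Ω) (hΩ₀ : volume Ω ≠ 0) (hΩ_top : volume Ω ≠ ∞) : RelativelyDense P := by
  have hh : Integrable (Ω.indicator fun _ => (1 : ℂ)) :=
    (integrable_indicator_iff hΩ).2 (integrableOn_const hΩ_top)
  refine hP.relativelyDense_of_tendsto_zero (x₀ := 0)
    (memBernstein_fourierInv hh Set.support_indicator_subset) ?_ ?_
  · simpa only [funext (Real.fourierInv_eq_fourier_neg _)] using!
      (tendsto_integral_exp_inner_smul_cocompact _).comp
        (Homeomorph.neg V).isClosedEmbedding.tendsto_cocompact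
  · rw [Real.fourierInv_eq']
    simp [integral_indicator hΩ, measureReal_def, ENNReal.toReal_eq_zero_iff, hΩ₀, hΩ_top]

end SamplingSetDensity

theorem translated_circles_sampling_general (hV : 1 < Module.finrank ℝ V) {Ω : Set V}
    (hΩ : IsCompact Ω) (hΩpos : 0 < volume Ω) {r : ℝ} (hr : 0 < r) {Λ : Set V}
    (hΛ : UniformlyDiscrete Λ) :
    IsSamplingSet Ω (Λ + sphere 0 r) ↔ 0 < lowerUniformDensity Λ := by
  rw [hΛ.lowerUniformDensity_pos_iff]
  refine ⟨fun h => ?_, fun h => isSamplingSet_add_sphere hV hΩ.isBounded h hr⟩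
  exact (h.relativelyDense hΩ.measurableSet hΩpos.ne' hΩ.measure_ne_top).of_add_of_isBounded
    isBounded_sphere

/-- Theorem 4 (translations of a circle): `P = V + T` is a sampling set for `B_Ω`
iff `D⁻(V) > 0`. -/
theorem translated_circles_sampling
    (Ω : Set (EuclideanSpace ℝ (Fin 2))) (hΩcompact : IsCompact Ω) (hΩconvex : Convex ℝ Ω)
    (hΩpos : 0 < volume Ω)
    (r : ℝ) (hr : 0 < r)
    (V : Set (EuclideanSpace ℝ (Fin 2))) (hV : UniformlyDiscrete V)
    (P : Set (EuclideanSpace ℝ (Fin 2)))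
    (hP : P = V + sphere (0 : EuclideanSpace ℝ (Fin 2)) r) :
    IsSamplingSet Ω P ↔ 0 < lowerUniformDensity V := by
  rw [hP]
  exact translated_circles_sampling_general (by simp) hΩcompact hΩpos hr hV
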